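/- Let T be a finite rooted planar tree. Then the set of restricted morphisms from T into the chain {1 < 2} (order-preserving maps μ from the vertices of T to {1,2} with μ(v) = 2 for every leaf v) is in bijection with the set of grafted trees with skeleton T, i.e. with the set of subtrees A of T containing the root of T such that every vertex of A has either all or none of its T-sons in A. -/

import Mathlib

/-!
To a restricted morphism `μ` attach the set of vertices strictly below which `μ` takes its lower
value: besides the root, these are the sons of the vertices with lower value, and a vertex brings
in all of its sons or none according to its own value. Conversely, the vertices where `μ` takes
its lower value are recovered as those having a son in the grafted tree, because none of them is a
leaf. The two features of a tree behind this are that a vertex other than the root has a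
predecessor above everything strictly below it, and that `v < w` forces a son of `v` below or
equal to `w`.
-/

/-- A finite rooted planar tree: a single constructor taking the ordered list
of principal subtrees of the root. -/
inductive PTree : Type where
  | node : List PTree → PTree

namespace PTree

/-- The trivial tree, reduced to its root. -/
def triv : PTree := node []

/-- Whether a tree is trivial. -/
def isTriv : PTree → Bool
  | .node [] => true
  | _ => false

mutual
/-- `d(T)`: the number of leaves of a tree. -/
def leaves : PTree → ℕ
  | .node [] => 1
  | .node (t :: ts) => leavesL (t :: ts)
def leavesL : List PTree → ℕ
  | [] => 0
  | t :: ts => leaves t + leavesL ts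
end

mutual
/-- `d°(T)`: the number of internal vertices of a tree. -/
def ints : PTree → ℕ
  | .node [] => 0
  | .node (t :: ts) => 1 + intsL (t :: ts)
def intsL : List PTree → ℕ
  | [] => 0
  | t :: ts => ints t + intsL ts
end

mutual
/-- The number of vertices of a tree. -/
def verts : PTree → ℕ
  | .node ts => 1 + vertsL ts
def vertsL : List PTree → ℕ
  | [] => 0
  | t :: ts => verts t + vertsL ts
end

/-- A tree is `k`-regular if every internal vertex has exactly `k` sons. -/
inductive Regular (k : ℕ) : PTree → Prop where
  | leaf : Regular k (.node [])
  | node (ts : List PTree) (hlen : ts.length = k) (h : ∀ t ∈ ts, Regular k t) :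
      Regular k (.node ts)

end PTree
namespace PTree

/-- `IsVertex T p` means that the address `p` (a path: at each step, the index
of the son to follow) is a vertex of the tree `T`. -/
def IsVertex : PTree → List ℕ → Prop
  | _, [] => True
  | .node ts, i :: p => ∃ h : i < ts.length, IsVertex ts[i] p

/-- The vertex set of a finite rooted planar tree, partially ordered by
`v ≤ w` iff `v` lies on the path from the root to `w`, i.e. iff the address of
`v` is a prefix of that of `w`. -/
def Vx (T : PTree) : Type := {p : List ℕ // IsVertex T p}

theorem isVertex_nil (T : PTree) : IsVertex T [] := by cases T; simp [IsVertex]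

/-- The root of a tree, as a vertex. -/
def rootVx (T : PTree) : Vx T := ⟨[], isVertex_nil T⟩

/-- A morphism from the poset of vertices of `T` into a poset `P`:
an order-preserving map (the vertex order being the prefix order on addresses). -/
def IsMorph {T : PTree} {P : Type} [Preorder P] (μ : Vx T → P) : Prop :=
  ∀ v w : Vx T, v.val <+: w.val → μ v ≤ μ w

/-- A vertex is a leaf if it has no sons (not even a `0`-th one). -/
def IsLeafVx {T : PTree} (v : Vx T) : Prop := ¬ IsVertex T (v.val ++ [0])

/-- `w` is a son of `v`. -/
def IsSon {T : PTree} (v w : Vx T) : Prop := ∃ i : ℕ, w.val = v.val ++ [i]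

/-- The number of restricted morphisms from the vertex poset of `T` into the
chain `{1 < 2 < … < m}` (realized as `Fin m`): order-preserving maps sending
every leaf of `T` to the top element `m` (i.e. `m - 1` in `Fin m`). -/
noncomputable def restrCount (m : ℕ) (T : PTree) : ℕ :=
  Nat.card {μ : Vx T → Fin m //
    IsMorph μ ∧ ∀ v : Vx T, IsLeafVx v → (μ v : ℕ) = m - 1}

/-- The number of all morphisms from the vertex poset of `T` into the chain
`{1 < 2 < … < m}` (realized as `Fin m`). -/
noncomputable def morphCount (m : ℕ) (T : PTree) : ℕ :=
  Nat.card {μ : Vx T → Fin m // IsMorph μ}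

/-- `σ(T)`: the number of surjective morphisms from the vertex poset of `T`
(with `n` vertices) onto the chain `{1 < 2 < … < n}`. -/
noncomputable def surjCount (T : PTree) : ℕ :=
  Nat.card {μ : Vx T → Fin T.verts // IsMorph μ ∧ Function.Surjective μ}

end PTree

section TreeOrder

variable {α : Type*} [PartialOrder α]

/-- A restricted morphism from a poset of vertices into the chain `{1 < 2}`, which is encoded as
`Fin 2`; the leaves are the maximal elements. -/
structure IsRestricted (μ : α → Fin 2) : Prop where
  monotone : Monotone μ
  eq_one_of_isMax : ∀ v, IsMax v → μ v = 1

/-- A grafted tree, encoded as the set of vertices of a subtree of the skeleton `α` containing the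
root; the sons of a vertex are the elements covering it. -/
structure IsGrafted [OrderBot α] (S : Set α) : Prop where
  bot_mem : ⊥ ∈ S
  isLowerSet : IsLowerSet S
  all_or_none : ∀ v ∈ S, (∀ w, v ⋖ w → w ∈ S) ∨ ∀ w, v ⋖ w → w ∉ S

/-- The grafted tree of a restricted morphism `μ`: the vertices strictly below which `μ` takes its
lower value. -/
def graftedOf (μ : α → Fin 2) : Set α := {v | ∀ u < v, μ u = 0}

open Classical in
/-- The restricted morphism of a grafted tree `S`: its lower value is taken strictly below the
vertices of `S`, that is, at the vertices having a son in `S`. -/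
noncomputable def morphOf (S : Set α) (v : α) : Fin 2 := if ∃ w ∈ S, v < w then 0 else 1

theorem morphOf_eq_zero_iff {S : Set α} {v : α} : morphOf S v = 0 ↔ ∃ w ∈ S, v < w := by
  simp [morphOf]

theorem isRestricted_morphOf (S : Set α) : IsRestricted (morphOf S) where
  monotone v w hvw := by
    by_cases hw : morphOf S w = 0
    · obtain ⟨x, hxS, hwx⟩ := morphOf_eq_zero_iff.mp hw
      exact (morphOf_eq_zero_iff.mpr ⟨x, hxS, hvw.trans_lt hwx⟩).trans_le (Fin.zero_le _)
    · exact (Fin.le_last _).trans_eq (Fin.eq_one_of_ne_zero _ hw).symm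
  eq_one_of_isMax v hv :=
    Fin.eq_one_of_ne_zero _ fun h =>
      let ⟨_, _, hvw⟩ := morphOf_eq_zero_iff.mp h
      hv.not_lt hvw

section PredOrder

variable [PredOrder α]

theorem mem_graftedOf_of_covBy {μ : α → Fin 2} (hμ : Monotone μ) {v w : α} (hv : μ v = 0)
    (hvw : v ⋖ w) : w ∈ graftedOf μ := fun u huw =>
  have huv : u ≤ v := hvw.pred_eq ▸ Order.le_pred_of_lt huw
  Fin.le_zero_iff.mp (hv ▸ hμ huv)

theorem isGrafted_graftedOf [OrderBot α] {μ : α → Fin 2} (hμ : Monotone μ) :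
    IsGrafted (graftedOf μ) where
  bot_mem _ hu := (not_lt_bot hu).elim
  isLowerSet _ _ hwv hv u huw := hv u (huw.trans_le hwv)
  all_or_none v _ := by
    by_cases hv : μ v = 0
    · exact .inl fun w hvw => mem_graftedOf_of_covBy hμ hv hvw
    · exact .inr fun w hvw hw => hv (hw v hvw.lt)

variable [IsStronglyAtomic α]

theorem IsRestricted.morphOf_graftedOf {μ : α → Fin 2} (hμ : IsRestricted μ) :
    morphOf (graftedOf μ) = μ := by
  suffices h : ∀ v, morphOf (graftedOf μ) v = 0 ↔ μ v = 0 from funext fun v => by grind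
  intro v
  rw [morphOf_eq_zero_iff]
  constructor
  · rintro ⟨w, hw, hvw⟩
    exact hw v hvw
  · intro hv
    have hv_not_max : ¬ IsMax v := fun hmax => by simp [hμ.eq_one_of_isMax v hmax] at hv
    obtain ⟨x, hvx⟩ := not_isMax_iff.mp hv_not_max
    obtain ⟨w, hvw, -⟩ := exists_covBy_le_of_lt hvx
    exact ⟨w, mem_graftedOf_of_covBy hμ.monotone hv hvw, hvw.lt⟩

theorem IsGrafted.graftedOf_morphOf [OrderBot α] {S : Set α} (hS : IsGrafted S) :
    graftedOf (morphOf S) = S := by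
  refine Set.Subset.antisymm (fun v hv => ?_) fun v hv u huv => morphOf_eq_zero_iff.mpr ⟨v, hv, huv⟩
  obtain rfl | hv_ne_bot := eq_or_ne v ⊥
  · exact hS.bot_mem
  have hpred : Order.pred v ⋖ v := Order.pred_covBy_of_not_isMin (mt isMin_iff_eq_bot.mp hv_ne_bot)
  obtain ⟨w, hwS, hlt⟩ := morphOf_eq_zero_iff.mp (hv _ hpred.lt)
  obtain ⟨x, hx, hxw⟩ := exists_covBy_le_of_lt hlt
  have hxS : x ∈ S := hS.isLowerSet hxw hwS
  have hpredS : Order.pred v ∈ S := hS.isLowerSet hlt.le hwS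
  exact (hS.all_or_none _ hpredS).elim (fun hall => hall v hpred) fun hnone => (hnone x hx hxS).elim

end PredOrder

end TreeOrder

theorem statement10_general (α : Type*) [PartialOrder α] [OrderBot α] [PredOrder α]
    [IsStronglyAtomic α] :
    Nonempty ({μ : α → Fin 2 // IsRestricted μ} ≃ {S : Set α // IsGrafted S}) :=
  ⟨{ toFun μ := ⟨graftedOf μ, isGrafted_graftedOf μ.2.monotone⟩
     invFun S := ⟨morphOf S, isRestricted_morphOf S.1⟩
     left_inv μ := Subtype.ext μ.2.morphOf_graftedOf
     right_inv S := Subtype.ext S.2.graftedOf_morphOf }⟩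

namespace PTree

variable {T : PTree}

theorem IsVertex.of_prefix : ∀ {T : PTree} {p q : List ℕ}, IsVertex T q → p <+: q → IsVertex T p
  | T, [], _, _, _ => isVertex_nil T
  | .node ts, i :: p, j :: q, ⟨hj, hq⟩, hpq => by
    obtain ⟨rfl, hpq'⟩ := List.cons_prefix_cons.mp hpq
    exact ⟨hj, hq.of_prefix hpq'⟩

theorem IsVertex.append_zero :
    ∀ {T : PTree} {p : List ℕ} {i : ℕ}, IsVertex T (p ++ [i]) → IsVertex T (p ++ [0])
  | .node _, [], _, ⟨hi, _⟩ => ⟨Nat.zero_lt_of_lt hi, isVertex_nil _⟩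
  | .node _, _ :: _, _, ⟨hj, h⟩ => ⟨hj, h.append_zero⟩

instance : PartialOrder (Vx T) where
  le v w := v.val <+: w.val
  le_refl v := List.prefix_refl v.val
  le_trans _ _ _ := List.IsPrefix.trans
  le_antisymm _ _ hvw hwv := Subtype.ext (hvw.eq_of_length_le hwv.length_le)

instance : OrderBot (Vx T) where
  bot := rootVx T
  bot_le _ := List.nil_prefix

theorem length_lt_length {v w : Vx T} (h : v < w) : v.val.length < w.val.length :=
  lt_of_not_ge fun hle => h.ne (Subtype.ext (h.le.eq_of_length_le hle))

instance : WellFoundedLT (Vx T) :=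
  ⟨Subrelation.wf length_lt_length (measure fun v : Vx T => v.val.length).wf⟩

instance : PredOrder (Vx T) where
  pred v := ⟨v.val.dropLast, v.2.of_prefix v.val.dropLast_prefix⟩
  pred_le v := v.val.dropLast_prefix
  min_of_le_pred {v} hv := by
    have hlen : v.val.length ≤ v.val.dropLast.length := List.IsPrefix.length_le hv
    rw [List.length_dropLast] at hlen
    have hnil : v.val = [] := List.eq_nil_of_length_eq_zero (by lia)
    exact isMin_iff_eq_bot.mpr (Subtype.ext hnil)
  le_pred_of_lt {v w} hvw := by
    have hlen := length_lt_length hvw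
    exact List.prefix_of_prefix_length_le hvw.le w.val.dropLast_prefix
      (by rw [List.length_dropLast]; lia)

theorem isSon_iff_covBy {v w : Vx T} : IsSon v w ↔ v ⋖ w := by
  constructor
  · rintro ⟨i, hw⟩
    have hpred : Order.pred w = v := Subtype.ext ((congrArg _ hw).trans List.dropLast_concat)
    have hw_ne_bot : w ≠ ⊥ := fun h => by
      have : v.val ++ [i] = [] := hw.symm.trans (congrArg Subtype.val h)
      simp at this
    exact hpred ▸ Order.pred_covBy_of_not_isMin (mt isMin_iff_eq_bot.mp hw_ne_bot)
  · intro h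
    have hw : w.val ≠ [] := List.ne_nil_of_length_pos (Nat.zero_lt_of_lt (length_lt_length h.lt))
    have hpred : w.val.dropLast = v.val := congrArg Subtype.val h.pred_eq
    exact ⟨w.val.getLast hw, hpred ▸ (List.dropLast_concat_getLast hw).symm⟩

theorem isLeafVx_iff_isMax {v : Vx T} : IsLeafVx v ↔ IsMax v := by
  rw [IsLeafVx, not_iff_comm, not_isMax_iff]
  constructor
  · rintro ⟨x, hvx⟩
    obtain ⟨w, hvw, -⟩ := exists_covBy_le_of_lt hvx
    obtain ⟨i, hw⟩ := isSon_iff_covBy.mpr hvw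
    exact (hw ▸ w.2).append_zero
  · intro hson
    exact ⟨⟨v.val ++ [0], hson⟩, (isSon_iff_covBy.mp ⟨0, rfl⟩).lt⟩

theorem isRestricted_iff {μ : Vx T → Fin 2} :
    IsRestricted μ ↔ IsMorph μ ∧ ∀ v, IsLeafVx v → (μ v : ℕ) = 1 := by
  simp only [isLeafVx_iff_isMax]
  exact ⟨fun h => ⟨fun _ _ hvw => h.monotone hvw,
      fun v hv => congrArg Fin.val (h.eq_one_of_isMax v hv)⟩,
    fun h => ⟨fun v w hvw => h.1 v w hvw, fun v hv => Fin.ext (h.2 v hv)⟩⟩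

theorem isGrafted_iff {S : Set (Vx T)} :
    IsGrafted S ↔ rootVx T ∈ S ∧ (∀ v w : Vx T, v.val <+: w.val → w ∈ S → v ∈ S) ∧
      ∀ v ∈ S, (∀ w, IsSon v w → w ∈ S) ∨ ∀ w, IsSon v w → w ∉ S := by
  simp only [isSon_iff_covBy]
  exact ⟨fun h => ⟨h.bot_mem, fun _ _ hvw => h.isLowerSet hvw, h.all_or_none⟩,
    fun h => ⟨h.1, fun w v hvw => h.2.1 v w hvw, h.2.2⟩⟩

end PTree

/-- For a finite rooted planar tree `T`, the restricted morphisms from `T` into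
the chain `{1 < 2}` (order-preserving maps sending every leaf to `2`) are in
bijection with the grafted trees with skeleton `T`, i.e. with the subtrees `A`
of `T` containing the root (prefix-closed sets of vertices containing the root)
such that every vertex of `A` has either all or none of its `T`-sons in `A`. -/
theorem statement10 (T : PTree) :
    Nonempty
      ({μ : PTree.Vx T → Fin 2 //
          PTree.IsMorph μ ∧ ∀ v : PTree.Vx T, PTree.IsLeafVx v → (μ v : ℕ) = 1} ≃
       {S : Set (PTree.Vx T) //
          PTree.rootVx T ∈ S ∧
          (∀ v w : PTree.Vx T, v.val <+: w.val → w ∈ S → v ∈ S) ∧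
          (∀ v ∈ S, (∀ w : PTree.Vx T, PTree.IsSon v w → w ∈ S) ∨
                    (∀ w : PTree.Vx T, PTree.IsSon v w → w ∉ S))}) := by
  simpa only [PTree.isRestricted_iff, PTree.isGrafted_iff] using
    statement10_general (PTree.Vx T)
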